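/- Correspondence of σπα-normal forms with σ-normal forms: suppose Γ ⊢ M reduces to Σ ⊢ L by zero or more steps of the σπα-judgement reduction ⇝, Σ ⊢ L is a σπα-normal form with respect to ⇝, (Γ ⊢ M) ⟹ U, and (Σ ⊢ L) ⟹ V. Then V is a σ-normal form and U σ-reduces to V in zero or more steps. -/

import Mathlib

/- Named terms and substitutions of the λπ-calculus. Variables are natural numbers. -/
mutual
inductive Tm : Type
  | var : ℕ → Tm
  | app : Tm → Tm → Tm
  | lam : ℕ → Tm → Tm
  | clos : Subst → Tm → Tm
inductive Subst : Type
  | id : Subst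
  | pi : ℕ → Subst
  | cons : Subst → Tm → ℕ → Subst
  | comp : Subst → Subst → Subst
end

/- Contexts are lists of variables; the head of the list is the *rightmost* variable,
so the context `Γ, a` of the paper is `a :: Γ`. -/
mutual
/-- `WfTm Γ M` is the judgement `Γ ⊢ M`. -/
inductive WfTm : List ℕ → Tm → Prop
  | var (Γ : List ℕ) (a : ℕ) : WfTm (a :: Γ) (.var a)
  | weak {Γ : List ℕ} {a : ℕ} (b : ℕ) : a ≠ b → WfTm Γ (.var a) → WfTm (b :: Γ) (.var a)
  | app {Γ M N} : WfTm Γ M → WfTm Γ N → WfTm Γ (.app M N)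
  | lam {Γ a M} : WfTm (a :: Γ) M → WfTm Γ (.lam a M)
  | clos {Γ s Δ M} : WfSub Γ s Δ → WfTm Δ M → WfTm Γ (.clos s M)
/-- `WfSub Γ s Δ` is the judgement `Γ ⊢ s ▷ Δ`. -/
inductive WfSub : List ℕ → Subst → List ℕ → Prop
  | id (Γ) : WfSub Γ .id Γ
  | pi (Γ a) : WfSub (a :: Γ) (.pi a) Γ
  | cons {Γ s Δ N} (a) : WfSub Γ s Δ → WfTm Γ N → WfSub Γ (.cons s N a) (a :: Δ)
  | comp {Γ s Δ q Θ} : WfSub Γ s Δ → WfSub Δ q Θ → WfSub Γ (.comp s q) Θ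
end

/-- The operator `O_{λa}` on sequences of finite sets (sequences are 0-indexed:
index `n` corresponds to the paper's index `n+1`). -/
def Olam (a : ℕ) (A : ℕ → Finset ℕ) : ℕ → Finset ℕ
  | 0 => (A 0).erase a ∪ A 1
  | n + 1 => A (n + 2)

/-- The operator `O_π`. -/
def Opi (A : ℕ → Finset ℕ) : ℕ → Finset ℕ
  | 0 => ∅
  | n + 1 => A n

mutual
/-- The free-variable sequence of a term: `FV M n` is the paper's `FV_{n+1}(M)`. -/
def FV : Tm → ℕ → Finset ℕ
  | .var a => fun n => if n = 0 then {a} else ∅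
  | .app M N => fun n => FV M n ∪ FV N n
  | .lam a M => Olam a (FV M)
  | .clos s M => Osub s (FV M)
/-- The operator `O_s` associated with a substitution `s`. -/
def Osub : Subst → (ℕ → Finset ℕ) → (ℕ → Finset ℕ)
  | .id => fun A => A
  | .pi _ => fun A => Opi A
  | .cons s N a => fun A n => Osub s (Olam a A) n ∪ FV N n
  | .comp s q => fun A => Osub s (Osub q A)
end

/-- Iterated abstraction `λΓ.M` (recall the head of the list is the rightmost variable). -/
def lamCtx : List ℕ → Tm → Tm
  | [], M => M
  | a :: Γ, M => lamCtx Γ (.lam a M)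

/-- Free variables of a judgement: `FV(Γ ⊢ M) = FV(λΓ.M)`. -/
def FVJ (Γ : List ℕ) (M : Tm) : ℕ → Finset ℕ := FV (lamCtx Γ M)

/-- Iterated lifting `⇑_Δ(s)`. -/
def Uparrow : List ℕ → Subst → Subst
  | [], s => s
  | a :: Δ, s => .cons (.comp (.pi a) (Uparrow Δ s)) (.var a) a

/- One-step reduction of the λπ-calculus (compatible closure).  The Boolean
parameter tells whether the rule `Beta` is allowed: `StepTm true` is λπ-reduction,
`StepTm false` is σπα-reduction. -/
mutual
inductive StepTm : Bool → Tm → Tm → Prop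
  | beta {a : ℕ} {M N : Tm} :
      StepTm true (.app (.lam a M) N) (.clos (.cons .id N a) M)
  | abs {β : Bool} {s : Subst} {a : ℕ} {M : Tm} :
      StepTm β (.clos s (.lam a M))
        (.lam a (.clos (.cons (.comp (.pi a) s) (.var a) a) M))
  | app {β : Bool} {s : Subst} {M N : Tm} :
      StepTm β (.clos s (.app M N)) (.app (.clos s M) (.clos s N))
  | consVar {β : Bool} {s : Subst} {N : Tm} {a : ℕ} :
      StepTm β (.clos (.cons s N a) (.var a)) N
  | new {β : Bool} {s : Subst} {N : Tm} {a b : ℕ} : a ≠ b →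
      StepTm β (.clos (.cons s N a) (.var b)) (.clos s (.var b))
  | idVar {β : Bool} {a : ℕ} : StepTm β (.clos .id (.var a)) (.var a)
  | clos {β : Bool} {s q : Subst} {M : Tm} :
      StepTm β (.clos s (.clos q M)) (.clos (.comp s q) M)
  | pi1 {β : Bool} {a b : ℕ} : a ≠ b → StepTm β (.clos (.pi a) (.var b)) (.var b)
  | pi2 {β : Bool} {s : Subst} {a b : ℕ} : a ≠ b →
      StepTm β (.clos (.comp s (.pi a)) (.var b)) (.clos s (.var b))
  | alpha1 {β : Bool} {a b : ℕ} {M : Tm} :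
      (∃ i, a ∈ FV (.lam a M) i) → (∀ i, b ∉ FV (.lam a M) i) →
      StepTm β (.lam a M) (.lam b (.clos (.cons (.pi b) (.var b) a) M))
  | lamCong {β : Bool} {a : ℕ} {M₁ M₂ : Tm} :
      StepTm β M₁ M₂ → StepTm β (.lam a M₁) (.lam a M₂)
  | appL {β : Bool} {M₁ M₂ N : Tm} : StepTm β M₁ M₂ → StepTm β (.app M₁ N) (.app M₂ N)
  | appR {β : Bool} {M N₁ N₂ : Tm} : StepTm β N₁ N₂ → StepTm β (.app M N₁) (.app M N₂)
  | closL {β : Bool} {s₁ s₂ : Subst} {M : Tm} :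
      StepSub β s₁ s₂ → StepTm β (.clos s₁ M) (.clos s₂ M)
  | closR {β : Bool} {s : Subst} {M₁ M₂ : Tm} :
      StepTm β M₁ M₂ → StepTm β (.clos s M₁) (.clos s M₂)
inductive StepSub : Bool → Subst → Subst → Prop
  | ass {β : Bool} {s q r : Subst} :
      StepSub β (.comp s (.comp q r)) (.comp (.comp s q) r)
  | idR {β : Bool} {s : Subst} : StepSub β (.comp s .id) s
  | idShift {β : Bool} {a : ℕ} : StepSub β (.comp .id (.pi a)) (.pi a)
  | consShift {β : Bool} {s : Subst} {N : Tm} {a : ℕ} :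
      StepSub β (.comp (.cons s N a) (.pi a)) s
  | map {β : Bool} {s q : Subst} {N : Tm} {a : ℕ} :
      StepSub β (.comp s (.cons q N a)) (.cons (.comp s q) (.clos s N) a)
  | consL {β : Bool} {s₁ s₂ : Subst} {N : Tm} {a : ℕ} :
      StepSub β s₁ s₂ → StepSub β (.cons s₁ N a) (.cons s₂ N a)
  | consR {β : Bool} {s : Subst} {N₁ N₂ : Tm} {a : ℕ} :
      StepTm β N₁ N₂ → StepSub β (.cons s N₁ a) (.cons s N₂ a)
  | compL {β : Bool} {s₁ s₂ q : Subst} :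
      StepSub β s₁ s₂ → StepSub β (.comp s₁ q) (.comp s₂ q)
  | compR {β : Bool} {s q₁ q₂ : Subst} :
      StepSub β q₁ q₂ → StepSub β (.comp s q₁) (.comp s q₂)
end

/-- One-step reduction `⇝` on judgements `Γ ⊢ M`, including the rule `α₂`.
`StepJ true` is λπ, `StepJ false` is σπα. -/
inductive StepJ (β : Bool) : List ℕ × Tm → List ℕ × Tm → Prop
  | step {Γ : List ℕ} {M₁ M₂ : Tm} : StepTm β M₁ M₂ → StepJ β (Γ, M₁) (Γ, M₂)
  | alpha2 {Γ Δ : List ℕ} {a b : ℕ} {M : Tm} :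
      (∃ i, a ∈ FVJ (Δ ++ [a]) M i) → (∀ i, b ∉ FVJ (Δ ++ [a]) M i) →
      StepJ β (Δ ++ a :: Γ, M)
        (Δ ++ b :: Γ, .clos (Uparrow Δ (.cons (.pi b) (.var b) a)) M)

/- Name-free (de Bruijn) terms and substitutions. -/
mutual
inductive NTm : Type
  | one : NTm
  | app : NTm → NTm → NTm
  | lam : NTm → NTm
  | clos : NSub → NTm → NTm
inductive NSub : Type
  | id : NSub
  | pi : NSub
  | cons : NSub → NTm → NSub
  | comp : NSub → NSub → NSub
end

/-- `piIter n` is the left-nested composition of `n+1` copies of `π`. -/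
def piIter : ℕ → NSub
  | 0 => .pi
  | k + 1 => .comp (piIter k) .pi

/-- `dbr n` is the de Bruijn index `n+1̲`: `dbr 0 = 1` and
`dbr (n+1) = ((…(π∘π)∘…)∘π)∘1` with `n+1` occurrences of `π`. -/
def dbr : ℕ → NTm
  | 0 => .one
  | n + 1 => .clos (piIter n) .one

/- One-step reduction of λσ (`NStepTm true`) resp. σ (`NStepTm false`)
on name-free terms/substitutions. -/
mutual
inductive NStepTm : Bool → NTm → NTm → Prop
  | beta {U V : NTm} : NStepTm true (.app (.lam U) V) (.clos (.cons .id V) U)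
  | abs {β : Bool} {u : NSub} {U : NTm} :
      NStepTm β (.clos u (.lam U)) (.lam (.clos (.cons (.comp .pi u) .one) U))
  | app {β : Bool} {u : NSub} {U V : NTm} :
      NStepTm β (.clos u (.app U V)) (.app (.clos u U) (.clos u V))
  | consVar {β : Bool} {u : NSub} {V : NTm} : NStepTm β (.clos (.cons u V) .one) V
  | idVar {β : Bool} : NStepTm β (.clos .id .one) .one
  | clos {β : Bool} {u v : NSub} {U : NTm} :
      NStepTm β (.clos u (.clos v U)) (.clos (.comp u v) U)
  | lamCong {β : Bool} {U₁ U₂ : NTm} : NStepTm β U₁ U₂ → NStepTm β (.lam U₁) (.lam U₂)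
  | appL {β : Bool} {U₁ U₂ V : NTm} : NStepTm β U₁ U₂ → NStepTm β (.app U₁ V) (.app U₂ V)
  | appR {β : Bool} {U V₁ V₂ : NTm} : NStepTm β V₁ V₂ → NStepTm β (.app U V₁) (.app U V₂)
  | closL {β : Bool} {u₁ u₂ : NSub} {U : NTm} :
      NStepSub β u₁ u₂ → NStepTm β (.clos u₁ U) (.clos u₂ U)
  | closR {β : Bool} {u : NSub} {U₁ U₂ : NTm} :
      NStepTm β U₁ U₂ → NStepTm β (.clos u U₁) (.clos u U₂)
inductive NStepSub : Bool → NSub → NSub → Prop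
  | ass {β : Bool} {u v w : NSub} : NStepSub β (.comp u (.comp v w)) (.comp (.comp u v) w)
  | idR {β : Bool} {u : NSub} : NStepSub β (.comp u .id) u
  | idShift {β : Bool} : NStepSub β (.comp .id .pi) .pi
  | consShift {β : Bool} {u : NSub} {V : NTm} : NStepSub β (.comp (.cons u V) .pi) u
  | map {β : Bool} {u v : NSub} {V : NTm} :
      NStepSub β (.comp u (.cons v V)) (.cons (.comp u v) (.clos u V))
  | consL {β : Bool} {u₁ u₂ : NSub} {V : NTm} :
      NStepSub β u₁ u₂ → NStepSub β (.cons u₁ V) (.cons u₂ V)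
  | consR {β : Bool} {u : NSub} {V₁ V₂ : NTm} :
      NStepTm β V₁ V₂ → NStepSub β (.cons u V₁) (.cons u V₂)
  | compL {β : Bool} {u₁ u₂ v : NSub} :
      NStepSub β u₁ u₂ → NStepSub β (.comp u₁ v) (.comp u₂ v)
  | compR {β : Bool} {u v₁ v₂ : NSub} :
      NStepSub β v₁ v₂ → NStepSub β (.comp u v₁) (.comp u v₂)
end

/- The correspondence `(Γ ⊢ M) ⟹ U` resp. `(Γ ⊢ s ▷ Δ) ⟹ u` between judgements and
name-free terms/substitutions (Definition 7.6 of the paper). -/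
mutual
inductive TrTm : List ℕ → Tm → NTm → Prop
  | var (Γ : List ℕ) (a : ℕ) : TrTm (a :: Γ) (.var a) (dbr 0)
  | weak {Γ : List ℕ} {a : ℕ} {n : ℕ} (b : ℕ) : a ≠ b →
      TrTm Γ (.var a) (dbr n) → TrTm (b :: Γ) (.var a) (dbr (n + 1))
  | app {Γ M N U V} : TrTm Γ M U → TrTm Γ N V → TrTm Γ (.app M N) (.app U V)
  | lam {Γ a M U} : TrTm (a :: Γ) M U → TrTm Γ (.lam a M) (.lam U)
  | clos {Γ s Δ M u U} : TrSub Γ s Δ u → TrTm Δ M U → TrTm Γ (.clos s M) (.clos u U)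
inductive TrSub : List ℕ → Subst → List ℕ → NSub → Prop
  | id (Γ) : TrSub Γ .id Γ .id
  | pi (Γ a) : TrSub (a :: Γ) (.pi a) Γ .pi
  | cons {Γ s Δ N u V} (a) : TrSub Γ s Δ u → TrTm Γ N V →
      TrSub Γ (.cons s N a) (a :: Δ) (.cons u V)
  | comp {Γ s Δ q Θ u v} : TrSub Γ s Δ u → TrSub Δ q Θ v →
      TrSub Γ (.comp s q) Θ (.comp u v)
end


/-!
Pure de Bruijn terms with parallel substitution form a model of both calculi: a closure is
interpreted by performing its substitution, so that `σ`-steps do not change the value, and each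
`σπα`-step, including the two renamings, translates to terms with the same value. A normal
judgement contains no closure: a stack of projections can only get stuck when its last factor `π_a`
meets the variable `a`, and then the `a` being discarded shadows a free variable of the same name
and can be renamed by `α`. Hence `V` is built from indices by application and abstraction alone.
Such terms are irreducible and determined by their value, and `σ` is weakly normalizing, so `U`
reduces to the only such term that has its value, which is `V`.
-/

/-- Pure λ-terms with de Bruijn indices, the values of name-free terms. -/
inductive PTm : Type
  | var : ℕ → PTm
  | app : PTm → PTm → PTm
  | lam : PTm → PTm

namespace PTm

/-- The sequence `t, σ 0, σ 1, …`: a parallel substitution or a renaming extended by one entry. -/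
def scons {α : Type*} (t : α) (σ : ℕ → α) : ℕ → α
  | 0 => t
  | n + 1 => σ n

/-- Renaming of the free indices. -/
def ren : (ℕ → ℕ) → PTm → PTm
  | ξ, .var n => .var (ξ n)
  | ξ, .app t u => .app (ren ξ t) (ren ξ u)
  | ξ, .lam t => .lam (ren (scons 0 (Nat.succ ∘ ξ)) t)

/-- The lifting of a parallel substitution under a binder. -/
def up (σ : ℕ → PTm) : ℕ → PTm := scons (.var 0) (fun n => ren Nat.succ (σ n))

/-- Capture-avoiding parallel substitution. -/
def sub : (ℕ → PTm) → PTm → PTm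
  | σ, .var n => σ n
  | σ, .app t u => .app (sub σ t) (sub σ u)
  | σ, .lam t => .lam (sub (up σ) t)

theorem ren_eq_sub (ξ : ℕ → ℕ) (t : PTm) : ren ξ t = sub (fun n => .var (ξ n)) t := by
  induction t generalizing ξ with
  | var n => rfl
  | app t u iht ihu => simp only [ren, sub, iht, ihu]
  | lam t ih =>
    simp only [ren, sub, ih]
    congr 2; funext n; cases n <;> rfl

theorem up_var : up var = var := by
  funext n; cases n <;> rfl

theorem sub_var (t : PTm) : sub var t = t := by
  induction t with
  | var n => rfl
  | app t u iht ihu => simp only [sub, iht, ihu]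
  | lam t ih => simp only [sub, up_var, ih]

theorem ren_ren (ξ ζ : ℕ → ℕ) (t : PTm) : ren ξ (ren ζ t) = ren (fun n => ξ (ζ n)) t := by
  induction t generalizing ξ ζ with
  | var n => rfl
  | app t u iht ihu => simp only [ren, iht, ihu]
  | lam t ih =>
    simp only [ren, ih]
    congr 2; funext n; cases n <;> rfl

theorem sub_ren (σ : ℕ → PTm) (ζ : ℕ → ℕ) (t : PTm) :
    sub σ (ren ζ t) = sub (fun n => σ (ζ n)) t := by
  induction t generalizing σ ζ with
  | var n => rfl
  | app t u iht ihu => simp only [ren, sub, iht, ihu]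
  | lam t ih =>
    simp only [ren, sub, ih]
    congr 2; funext n; cases n <;> rfl

theorem ren_sub (ξ : ℕ → ℕ) (σ : ℕ → PTm) (t : PTm) :
    ren ξ (sub σ t) = sub (fun n => ren ξ (σ n)) t := by
  induction t generalizing ξ σ with
  | var n => rfl
  | app t u iht ihu => simp only [ren, sub, iht, ihu]
  | lam t ih =>
    simp only [ren, sub, ih]
    congr 2; funext n
    cases n with
    | zero => rfl
    | succ n => simp only [up, scons, ren_ren]; rfl

theorem sub_sub (σ τ : ℕ → PTm) (t : PTm) : sub σ (sub τ t) = sub (fun n => sub σ (τ n)) t := by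
  induction t generalizing σ τ with
  | var n => rfl
  | app t u iht ihu => simp only [sub, iht, ihu]
  | lam t ih =>
    simp only [sub, ih]
    congr 2; funext n
    cases n with
    | zero => rfl
    | succ n => simp only [up, scons, sub_ren, ren_sub]

theorem up_eq_scons (σ : ℕ → PTm) :
    up σ = scons (.var 0) (fun n => sub (fun k => .var (k + 1)) (σ n)) := by
  simp only [up, ren_eq_sub, Nat.succ_eq_add_one]

theorem scons_var_zero : scons (.var 0) (fun n => .var (n + 1)) = var := by
  funext n; cases n <;> rfl

end PTm

mutual
/-- The value of a name-free term: all its closures are carried out. -/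
def NTm.eval : NTm → PTm
  | .one => .var 0
  | .app U V => .app U.eval V.eval
  | .lam U => .lam U.eval
  | .clos u U => .sub u.eval U.eval
/-- The parallel substitution denoted by a name-free substitution. -/
def NSub.eval : NSub → ℕ → PTm
  | .id => .var
  | .pi => fun n => .var (n + 1)
  | .cons u V => .scons V.eval u.eval
  | .comp u v => fun n => .sub u.eval (v.eval n)
end

theorem eval_piIter (k : ℕ) : (piIter k).eval = fun n => .var (n + k + 1) := by
  induction k with
  | zero => rfl
  | succ k ih =>
    funext n
    simp only [piIter, NSub.eval, ih, PTm.sub, PTm.var.injEq]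
    omega

theorem eval_dbr (n : ℕ) : (dbr n).eval = .var n := by
  cases n with
  | zero => rfl
  | succ n => simp only [dbr, NTm.eval, eval_piIter, PTm.sub, zero_add]

theorem dbr_injective : Function.Injective dbr := fun n m h => by
  simpa only [eval_dbr, PTm.var.injEq] using congrArg NTm.eval h

mutual
theorem NStepTm.eval_eq : ∀ {U V : NTm}, NStepTm false U V → U.eval = V.eval
  | _, _, .abs => by simp only [NTm.eval, NSub.eval, PTm.sub, PTm.up_eq_scons]
  | _, _, .app => rfl
  | _, _, .consVar => rfl
  | _, _, .idVar => rfl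
  | _, _, .clos => PTm.sub_sub _ _ _
  | _, _, .lamCong h => by simp only [NTm.eval, h.eval_eq]
  | _, _, .appL h => by simp only [NTm.eval, h.eval_eq]
  | _, _, .appR h => by simp only [NTm.eval, h.eval_eq]
  | _, _, .closL h => by simp only [NTm.eval, h.eval_eq]
  | _, _, .closR h => by simp only [NTm.eval, h.eval_eq]
termination_by structural U => U
theorem NStepSub.eval_eq : ∀ {u v : NSub}, NStepSub false u v → u.eval = v.eval
  | _, _, .ass => funext fun _ => PTm.sub_sub _ _ _
  | _, _, .idR => rfl
  | _, _, .idShift => rfl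
  | _, _, .consShift => rfl
  | _, _, .map => by funext n; cases n <;> rfl
  | _, _, .consL h => by simp only [NSub.eval, h.eval_eq]
  | _, _, .consR h => by simp only [NSub.eval, h.eval_eq]
  | _, _, .compL h => by simp only [NSub.eval, h.eval_eq]
  | _, _, .compR h => by simp only [NSub.eval, h.eval_eq]
termination_by structural u => u
end

open Relation

local infix:50 " ↠ " => ReflTransGen (NStepTm false)
local infix:50 " ↠ₛ " => ReflTransGen (NStepSub false)

section Congruence

variable {U U' V V' : NTm} {u u' v v' : NSub}

theorem NTm.app_red (hU : U ↠ U') (hV : V ↠ V') : .app U V ↠ .app U' V' :=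
  (hU.lift (NTm.app · V) fun _ _ => .appL).trans (hV.lift (NTm.app U') fun _ _ => .appR)

theorem NTm.lam_red (hU : U ↠ U') : .lam U ↠ .lam U' :=
  hU.lift NTm.lam fun _ _ => .lamCong

theorem NTm.clos_red (hu : u ↠ₛ u') (hU : U ↠ U') : .clos u U ↠ .clos u' U' :=
  (hu.lift (NTm.clos · U) fun _ _ => .closL).trans (hU.lift (NTm.clos u') fun _ _ => .closR)

theorem NSub.cons_red (hu : u ↠ₛ u') (hV : V ↠ V') : .cons u V ↠ₛ .cons u' V' :=
  (hu.lift (NSub.cons · V) fun _ _ => .consL).trans (hV.lift (NSub.cons u') fun _ _ => .consR)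

theorem NSub.comp_red (hu : u ↠ₛ u') (hv : v ↠ₛ v') : .comp u v ↠ₛ .comp u' v' :=
  (hu.lift (NSub.comp · v) fun _ _ => .compL).trans (hv.lift (NSub.comp u') fun _ _ => .compR)

end Congruence

/-- The `σ`-normal terms, described as those built from de Bruijn indices by application and
abstraction. -/
inductive NTm.IsNf : NTm → Prop
  | dbr (n : ℕ) : IsNf (dbr n)
  | app {U V : NTm} : IsNf U → IsNf V → IsNf (.app U V)
  | lam {U : NTm} : IsNf U → IsNf (.lam U)

/-- A name-free term with the given value; on normal terms it is a left inverse of `NTm.eval`. -/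
def PTm.quote : PTm → NTm
  | .var n => dbr n
  | .app t u => .app t.quote u.quote
  | .lam t => .lam t.quote

theorem NTm.IsNf.quote_eval {U : NTm} (h : U.IsNf) : U.eval.quote = U := by
  induction h with
  | dbr n => rw [eval_dbr, PTm.quote]
  | app _ _ ihU ihV => rw [NTm.eval, PTm.quote, ihU, ihV]
  | lam _ ih => rw [NTm.eval, PTm.quote, ih]

theorem NTm.eval_injOn_isNf : Set.InjOn NTm.eval {U | U.IsNf} := fun U hU V hV h => by
  rw [← NTm.IsNf.quote_eval hU, h, NTm.IsNf.quote_eval hV]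

theorem NTm.eval_eq_of_red {U V : NTm} (h : U ↠ V) : U.eval = V.eval := by
  induction h with
  | refl => rfl
  | tail _ hs ih => exact ih.trans hs.eval_eq

theorem not_nStepSub_piIter : ∀ (k : ℕ) (u : NSub), ¬ NStepSub false (piIter k) u
  | 0, _, h => nomatch h
  | 1, _, .compL h => nomatch h
  | k + 2, _, .compL h => not_nStepSub_piIter (k + 1) _ h

theorem not_nStepTm_dbr : ∀ (n : ℕ) (U : NTm), ¬ NStepTm false (dbr n) U
  | 0, _, h => nomatch h
  | 1, _, .closL h => nomatch h
  | n + 2, _, .closL h => not_nStepSub_piIter (n + 1) _ h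

theorem NTm.IsNf.not_nStepTm {U : NTm} (h : U.IsNf) : ∀ V, ¬ NStepTm false U V := by
  induction h with
  | dbr n => exact not_nStepTm_dbr n
  | app _ _ ihU ihV =>
    rintro _ (_ | _)
    case appL h => exact ihU _ h
    case appR h => exact ihV _ h
  | lam _ ih =>
    rintro _ (_ | _)
    case lamCong h => exact ih _ h

/-- The `σ`-normal substitutions whose entries all lie in `S`. -/
inductive NSub.IsNf (S : Set NTm) : NSub → Prop
  | id : IsNf S .id
  | shift (k : ℕ) : IsNf S (piIter k)
  | cons {u : NSub} {V : NTm} : IsNf S u → V ∈ S → IsNf S (.cons u V)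

/-- The substitution `u` reduces to a normal one whose entries all lie in `S`. -/
def NSub.HasNf (S : Set NTm) (u : NSub) : Prop := ∃ v, u ↠ₛ v ∧ v.IsNf S

/-- The term `U` reduces to a normal one. -/
def NTm.HasNf (U : NTm) : Prop := ∃ V, U ↠ V ∧ V.IsNf

section WeakNormalization

variable {S : Set NTm} {u v : NSub} {U V : NTm}

theorem NSub.IsNf.hasNf (h : u.IsNf S) : u.HasNf S := ⟨u, .refl, h⟩

theorem NSub.HasNf.of_red (h : u ↠ₛ v) : v.HasNf S → u.HasNf S :=
  fun ⟨w, hw, hnf⟩ => ⟨w, h.trans hw, hnf⟩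

theorem NTm.HasNf.of_red (h : U ↠ V) : V.HasNf → U.HasNf :=
  fun ⟨W, hW, hnf⟩ => ⟨W, h.trans hW, hnf⟩

theorem NTm.HasNf.app : U.HasNf → V.HasNf → (NTm.app U V).HasNf :=
  fun ⟨_, hU, hU'⟩ ⟨_, hV, hV'⟩ => ⟨_, NTm.app_red hU hV, hU'.app hV'⟩

theorem NTm.HasNf.lam : U.HasNf → (NTm.lam U).HasNf :=
  fun ⟨_, hU, hU'⟩ => ⟨_, NTm.lam_red hU, hU'.lam⟩

theorem NSub.IsNf.comp_pi (h : u.IsNf S) : (NSub.comp u .pi).HasNf S := by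
  cases h with
  | id => exact ⟨_, .single .idShift, .shift 0⟩
  | shift k => exact ⟨_, .refl, .shift (k + 1)⟩
  | cons hu _ => exact ⟨_, .single .consShift, hu⟩

theorem NSub.IsNf.comp_piIter (h : u.IsNf S) (k : ℕ) : (NSub.comp u (piIter k)).HasNf S := by
  induction k with
  | zero => exact h.comp_pi
  | succ k ih =>
    obtain ⟨v, hv, hnf⟩ := ih
    exact .of_red (.head .ass (NSub.comp_red hv .refl)) hnf.comp_pi

theorem pi_comp_piIter_red (k : ℕ) : .comp .pi (piIter k) ↠ₛ piIter (k + 1) := by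
  induction k with
  | zero => exact .refl
  | succ k ih => exact .head .ass (NSub.comp_red ih .refl)

theorem NSub.IsNf.clos_one (hS : ∀ V ∈ S, V.IsNf) (h : u.IsNf S) : (NTm.clos u .one).HasNf := by
  cases h with
  | id => exact ⟨_, .single .idVar, .dbr 0⟩
  | shift k => exact ⟨_, .refl, .dbr (k + 1)⟩
  | cons _ hV => exact ⟨_, .single .consVar, hS _ hV⟩

theorem NSub.IsNf.clos_dbr (hS : ∀ V ∈ S, V.IsNf) (h : u.IsNf S) :
    ∀ n, (NTm.clos u (dbr n)).HasNf
  | 0 => h.clos_one hS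
  | n + 1 => by
    obtain ⟨v, hv, hnf⟩ := h.comp_piIter n
    exact .of_red (.head .clos (NTm.clos_red hv .refl)) (hnf.clos_one hS)

/-- Sets of normal terms that may serve as entries of a substitution pushed under a binder. Used
first for the set of indices, which makes shifts normalize, and then for all normal terms. -/
structure ShiftClosed (S : Set NTm) : Prop where
  isNf : ∀ V ∈ S, V.IsNf
  one_mem : .one ∈ S
  exists_shift : ∀ V ∈ S, ∃ V' ∈ S, .clos .pi V ↠ V'

namespace ShiftClosed

theorem hasNf_pi_comp (hS : ShiftClosed S) (h : u.IsNf S) : (NSub.comp .pi u).HasNf S := by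
  induction h with
  | id => exact ⟨_, .single .idR, .shift 0⟩
  | shift k => exact ⟨_, pi_comp_piIter_red k, .shift (k + 1)⟩
  | cons _ hV ih =>
    obtain ⟨v, hv, hnf⟩ := ih
    obtain ⟨V', hV', hred⟩ := hS.exists_shift _ hV
    exact ⟨_, .head .map (NSub.cons_red hv hred), hnf.cons hV'⟩

theorem hasNf_clos (hS : ShiftClosed S) (hU : U.IsNf) (hu : u.IsNf S) : (NTm.clos u U).HasNf := by
  induction hU generalizing u with
  | dbr n => exact hu.clos_dbr hS.isNf n
  | app _ _ ihU ihV => exact .of_red (.single .app) ((ihU hu).app (ihV hu))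
  | lam _ ih =>
    obtain ⟨v, hv, hnf⟩ := hS.hasNf_pi_comp hu
    have hlift := ih (hnf.cons hS.one_mem)
    exact .of_red (.single .abs) (hlift.of_red (NTm.clos_red (NSub.cons_red hv .refl) .refl)).lam

end ShiftClosed

theorem shiftClosed_range_dbr : ShiftClosed (Set.range dbr) where
  isNf := by rintro _ ⟨n, rfl⟩; exact .dbr n
  one_mem := ⟨0, rfl⟩
  exists_shift := by
    rintro _ ⟨_ | n, rfl⟩
    · exact ⟨_, ⟨1, rfl⟩, .refl⟩
    · exact ⟨_, ⟨n + 2, rfl⟩, .head .clos (NTm.clos_red (pi_comp_piIter_red n) .refl)⟩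

theorem shiftClosed_setOf_isNf : ShiftClosed {V | V.IsNf} where
  isNf _ hV := hV
  one_mem := .dbr 0
  exists_shift V hV := by
    obtain ⟨V', hred, hV'⟩ := shiftClosed_range_dbr.hasNf_clos hV (.shift 0)
    exact ⟨V', hV', hred⟩

theorem NSub.IsNf.comp (hu : u.IsNf {V | V.IsNf}) (hv : v.IsNf {V | V.IsNf}) :
    (NSub.comp u v).HasNf {V | V.IsNf} := by
  induction hv with
  | id => exact .of_red (.single .idR) hu.hasNf
  | shift k => exact hu.comp_piIter k
  | cons _ hV ih =>
    obtain ⟨w, hw, hnf⟩ := ih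
    obtain ⟨V', hred, hV'⟩ := shiftClosed_setOf_isNf.hasNf_clos hV hu
    exact ⟨_, .head .map (NSub.cons_red hw hred), hnf.cons hV'⟩

mutual
theorem NTm.hasNf : ∀ U : NTm, U.HasNf
  | .one => ⟨_, .refl, .dbr 0⟩
  | .app U V => U.hasNf.app V.hasNf
  | .lam U => U.hasNf.lam
  | .clos u U => by
    obtain ⟨v, hv, hvnf⟩ := u.hasNf
    obtain ⟨V, hV, hVnf⟩ := U.hasNf
    exact .of_red (NTm.clos_red hv hV) (shiftClosed_setOf_isNf.hasNf_clos hVnf hvnf)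
theorem NSub.hasNf : ∀ u : NSub, u.HasNf {V | V.IsNf}
  | .id => NSub.IsNf.id.hasNf
  | .pi => (NSub.IsNf.shift 0).hasNf
  | .cons u V => by
    obtain ⟨v, hv, hvnf⟩ := u.hasNf
    obtain ⟨W, hW, hWnf⟩ := V.hasNf
    exact ⟨_, NSub.cons_red hv hW, hvnf.cons hWnf⟩
  | .comp u v => by
    obtain ⟨u', hu, hunf⟩ := u.hasNf
    obtain ⟨v', hv, hvnf⟩ := v.hasNf
    exact .of_red (NSub.comp_red hu hv) (hunf.comp hvnf)
end

end WeakNormalization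

section Translation

variable {Γ : List ℕ} {U : NTm} {a b : ℕ}

mutual
theorem TrTm.unique : ∀ {Γ : List ℕ} {M : Tm} {U U' : NTm}, TrTm Γ M U → TrTm Γ M U' → U = U'
  | _, _, _, _, .var _ _, .var _ _ => rfl
  | _, _, _, _, .var _ _, .weak _ hne _ => absurd rfl hne
  | _, _, _, _, .weak _ hne _, .var _ _ => absurd rfl hne
  | _, _, _, _, .weak _ _ h, .weak _ _ h' => by rw [dbr_injective (h.unique h')]
  | _, _, _, _, .app hM hN, .app hM' hN' => by rw [hM.unique hM', hN.unique hN']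
  | _, _, _, _, .lam h, .lam h' => by rw [h.unique h']
  | _, _, _, _, .clos hs hM, .clos hs' hM' => by
    obtain ⟨rfl, rfl⟩ := hs.unique hs'
    rw [hM.unique hM']
theorem TrSub.unique : ∀ {Γ Δ Δ' : List ℕ} {s : Subst} {u u' : NSub},
    TrSub Γ s Δ u → TrSub Γ s Δ' u' → Δ = Δ' ∧ u = u'
  | _, _, _, _, _, _, .id _, .id _ => ⟨rfl, rfl⟩
  | _, _, _, _, _, _, .pi _ _, .pi _ _ => ⟨rfl, rfl⟩
  | _, _, _, _, _, _, .cons _ hs hN, .cons _ hs' hN' => by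
    obtain ⟨rfl, rfl⟩ := hs.unique hs'
    exact ⟨rfl, by rw [hN.unique hN']⟩
  | _, _, _, _, _, _, .comp hs hq, .comp hs' hq' => by
    obtain ⟨rfl, rfl⟩ := hs.unique hs'
    obtain ⟨rfl, rfl⟩ := hq.unique hq'
    exact ⟨rfl, rfl⟩
end

theorem TrTm.exists_eq_dbr (h : TrTm Γ (.var b) U) : ∃ n, U = dbr n := by
  cases h with
  | var => exact ⟨0, rfl⟩
  | weak => exact ⟨_, rfl⟩

theorem TrTm.exists_weaken (h : TrTm Γ (.var b) U) (hne : b ≠ a) :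
    ∃ U', TrTm (a :: Γ) (.var b) U' ∧ U'.eval = (NTm.clos .pi U).eval := by
  obtain ⟨n, rfl⟩ := h.exists_eq_dbr
  exact ⟨_, .weak a hne h, by simp only [NTm.eval, NSub.eval, eval_dbr, PTm.sub]⟩

theorem TrTm.exists_strengthen (h : TrTm (a :: Γ) (.var b) U) (hne : b ≠ a) :
    ∃ U', TrTm Γ (.var b) U' ∧ U.eval = (NTm.clos .pi U').eval := by
  cases h with
  | var => exact absurd rfl hne
  | weak _ _ h => exact ⟨_, h, by simp only [NTm.eval, NSub.eval, eval_dbr, PTm.sub]⟩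

mutual
theorem StepTm.exists_trTm : ∀ {M M' : Tm}, StepTm false M M' → ∀ {Γ : List ℕ} {U : NTm},
    TrTm Γ M U → ∃ U', TrTm Γ M' U' ∧ U'.eval = U.eval
  | _, _, .abs, _, _, .clos hs (.lam hM) =>
    ⟨_, .lam (.clos (.cons _ (.comp (.pi _ _) hs) (.var _ _)) hM), NStepTm.abs.eval_eq.symm⟩
  | _, _, .app, _, _, .clos hs (.app hM hN) => ⟨_, .app (.clos hs hM) (.clos hs hN), rfl⟩
  | _, _, .consVar, _, _, .clos (.cons _ _ hN) hv => by
    obtain rfl := hv.unique (.var _ _)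
    exact ⟨_, hN, rfl⟩
  | _, _, .new hne, _, _, .clos (.cons _ hs _) hv =>
    let ⟨_, hv', e⟩ := hv.exists_strengthen hne.symm
    ⟨_, .clos hs hv', by simp only [NTm.eval, NSub.eval, e, PTm.sub_sub, PTm.sub, PTm.scons]⟩
  | _, _, .idVar, _, _, .clos (.id _) hv => ⟨_, hv, (PTm.sub_var _).symm⟩
  | _, _, .clos, _, _, .clos hs (.clos hq hM) =>
    ⟨_, .clos (.comp hs hq) hM, NStepTm.clos.eval_eq.symm⟩
  | _, _, .pi1 hne, _, _, .clos (.pi _ _) hv => hv.exists_weaken hne.symm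
  | _, _, .pi2 hne, _, _, .clos (.comp hs (.pi _ _)) hv =>
    let ⟨_, hv', e⟩ := hv.exists_weaken hne.symm
    ⟨_, .clos hs hv', by simp only [NTm.eval, NSub.eval, e, PTm.sub_sub]⟩
  | _, _, .alpha1 _ _, _, _, .lam hM =>
    ⟨_, .lam (.clos (.cons _ (.pi _ _) (.var _ _)) hM), by
      simp only [NTm.eval, NSub.eval, eval_dbr, PTm.scons_var_zero, PTm.sub_var]⟩
  | _, _, .lamCong h, _, _, .lam hM =>
    let ⟨_, hM', e⟩ := h.exists_trTm hM
    ⟨_, .lam hM', by simp only [NTm.eval, e]⟩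
  | _, _, .appL h, _, _, .app hM hN =>
    let ⟨_, hM', e⟩ := h.exists_trTm hM
    ⟨_, .app hM' hN, by simp only [NTm.eval, e]⟩
  | _, _, .appR h, _, _, .app hM hN =>
    let ⟨_, hN', e⟩ := h.exists_trTm hN
    ⟨_, .app hM hN', by simp only [NTm.eval, e]⟩
  | _, _, .closL h, _, _, .clos hs hM =>
    let ⟨_, hs', e⟩ := h.exists_trSub hs
    ⟨_, .clos hs' hM, by simp only [NTm.eval, e]⟩
  | _, _, .closR h, _, _, .clos hs hM =>
    let ⟨_, hM', e⟩ := h.exists_trTm hM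
    ⟨_, .clos hs hM', by simp only [NTm.eval, e]⟩
termination_by structural M => M
theorem StepSub.exists_trSub : ∀ {s s' : Subst}, StepSub false s s' → ∀ {Γ Δ : List ℕ} {u : NSub},
    TrSub Γ s Δ u → ∃ u', TrSub Γ s' Δ u' ∧ u'.eval = u.eval
  | _, _, .ass, _, _, _, .comp hs (.comp hq hr) =>
    ⟨_, .comp (.comp hs hq) hr, NStepSub.ass.eval_eq.symm⟩
  | _, _, .idR, _, _, _, .comp hs (.id _) => ⟨_, hs, rfl⟩
  | _, _, .idShift, _, _, _, .comp hs hπ => by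
    cases hs
    cases hπ
    exact ⟨_, .pi _ _, rfl⟩
  | _, _, .consShift, _, _, _, .comp (.cons _ hs _) (.pi _ _) => ⟨_, hs, rfl⟩
  | _, _, .map, _, _, _, .comp hs (.cons _ hq hN) =>
    ⟨_, .cons _ (.comp hs hq) (.clos hs hN), NStepSub.map.eval_eq.symm⟩
  | _, _, .consL h, _, _, _, .cons _ hs hN =>
    let ⟨_, hs', e⟩ := h.exists_trSub hs
    ⟨_, .cons _ hs' hN, by simp only [NSub.eval, e]⟩
  | _, _, .consR h, _, _, _, .cons _ hs hN =>
    let ⟨_, hN', e⟩ := h.exists_trTm hN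
    ⟨_, .cons _ hs hN', by simp only [NSub.eval, e]⟩
  | _, _, .compL h, _, _, _, .comp hs hq =>
    let ⟨_, hs', e⟩ := h.exists_trSub hs
    ⟨_, .comp hs' hq, by simp only [NSub.eval, e]⟩
  | _, _, .compR h, _, _, _, .comp hs hq =>
    let ⟨_, hq', e⟩ := h.exists_trSub hq
    ⟨_, .comp hs hq', by simp only [NSub.eval, e]⟩
termination_by structural s => s
end

theorem exists_trSub_uparrow (a b : ℕ) (Γ Δ : List ℕ) :
    ∃ u, TrSub (Δ ++ b :: Γ) (Uparrow Δ (.cons (.pi b) (.var b) a)) (Δ ++ a :: Γ) u ∧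
      u.eval = PTm.var := by
  induction Δ with
  | nil => exact ⟨_, .cons _ (.pi _ _) (.var _ _), PTm.scons_var_zero⟩
  | cons c Δ ih =>
    obtain ⟨u, hu, e⟩ := ih
    refine ⟨_, .cons _ (.comp (.pi _ _) hu) (.var _ _), ?_⟩
    simp only [NSub.eval, e, eval_dbr, PTm.sub, PTm.scons_var_zero]

theorem StepJ.exists_trTm {p q : List ℕ × Tm} (h : StepJ false p q) (hU : TrTm p.1 p.2 U) :
    ∃ U', TrTm q.1 q.2 U' ∧ U'.eval = U.eval := by
  cases h with
  | step h => exact h.exists_trTm hU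
  | alpha2 =>
    obtain ⟨u, hu, e⟩ := exists_trSub_uparrow _ _ _ _
    exact ⟨_, .clos hu hU, by rw [NTm.eval, e, PTm.sub_var]⟩

theorem exists_trTm_of_reflTransGen_stepJ {p q : List ℕ × Tm}
    (h : ReflTransGen (StepJ false) p q) (hU : TrTm p.1 p.2 U) :
    ∃ U', TrTm q.1 q.2 U' ∧ U'.eval = U.eval := by
  induction h with
  | refl => exact ⟨U, hU, rfl⟩
  | tail _ hs ih =>
    obtain ⟨U₁, h₁, e₁⟩ := ih
    obtain ⟨U₂, h₂, e₂⟩ := hs.exists_trTm h₁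
    exact ⟨U₂, h₂, e₂.trans e₁⟩

end Translation

section FreeVariables

/-- All members of the sequence lie in one finite set. -/
def UniformlyFinite (A : ℕ → Finset ℕ) : Prop := ∃ B : Finset ℕ, ∀ i, A i ⊆ B

variable {A B : ℕ → Finset ℕ}

theorem UniformlyFinite.union : UniformlyFinite A → UniformlyFinite B →
    UniformlyFinite fun i => A i ∪ B i :=
  fun ⟨C, hC⟩ ⟨D, hD⟩ => ⟨C ∪ D, fun i => Finset.union_subset_union (hC i) (hD i)⟩

theorem UniformlyFinite.olam (a : ℕ) : UniformlyFinite A → UniformlyFinite (Olam a A)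
  | ⟨C, hC⟩ => ⟨C, fun
    | 0 => Finset.union_subset ((Finset.erase_subset _ _).trans (hC 0)) (hC 1)
    | _ + 1 => hC _⟩

theorem UniformlyFinite.opi : UniformlyFinite A → UniformlyFinite (Opi A)
  | ⟨C, hC⟩ => ⟨C, fun
    | 0 => Finset.empty_subset _
    | _ + 1 => hC _⟩

mutual
theorem uniformlyFinite_FV : ∀ M : Tm, UniformlyFinite (FV M)
  | .var a => ⟨{a}, fun i => by simp only [FV]; split <;> simp⟩
  | .app M N => by simpa only [FV] using (uniformlyFinite_FV M).union (uniformlyFinite_FV N)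
  | .lam a M => by simpa only [FV] using (uniformlyFinite_FV M).olam a
  | .clos s M => by simpa only [FV] using uniformlyFinite_Osub s (uniformlyFinite_FV M)
theorem uniformlyFinite_Osub : ∀ (s : Subst) {A : ℕ → Finset ℕ}, UniformlyFinite A →
    UniformlyFinite (Osub s A)
  | .id, _, h => by simpa only [Osub] using h
  | .pi _, _, h => by simpa only [Osub] using h.opi
  | .cons s N a, _, h => by
    simpa only [Osub] using (uniformlyFinite_Osub s (h.olam a)).union (uniformlyFinite_FV N)
  | .comp s q, _, h => by
    simpa only [Osub] using uniformlyFinite_Osub s (uniformlyFinite_Osub q h)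
end

theorem exists_forall_notMem_FV (M : Tm) : ∃ b, ∀ i, b ∉ FV M i := by
  obtain ⟨B, hB⟩ := uniformlyFinite_FV M
  obtain ⟨b, hb⟩ := Infinite.exists_notMem_finset B
  exact ⟨b, fun i hi => hb (hB i hi)⟩

theorem Olam_mono (a : ℕ) (h : ∀ i, A i ⊆ B i) : ∀ i, Olam a A i ⊆ Olam a B i
  | 0 => Finset.union_subset_union (Finset.erase_subset_erase _ (h 0)) (h 1)
  | _ + 1 => h _

theorem subset_Olam_succ (a i : ℕ) : A (i + 1) ⊆ Olam a A i := by
  cases i with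
  | zero => exact Finset.subset_union_right
  | succ i => exact subset_rfl

theorem FVJ_mono (Δ : List ℕ) {M N : Tm} (h : ∀ i, FV M i ⊆ FV N i) (i : ℕ) :
    FVJ Δ M i ⊆ FVJ Δ N i := by
  induction Δ generalizing M N with
  | nil => exact h i
  | cons c _ ih => exact ih (M := .lam c M) (N := .lam c N) (by simpa only [FV] using Olam_mono c h)

theorem FV_add_length_subset_FVJ (Δ : List ℕ) (M : Tm) (i : ℕ) :
    FV M (i + Δ.length) ⊆ FVJ Δ M i := by
  induction Δ generalizing M with
  | nil => exact subset_rfl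
  | cons c Δ ih =>
    refine subset_trans ?_ (ih (.lam c M))
    simpa only [FV, List.length_cons, ← add_assoc] using subset_Olam_succ c (i + Δ.length)

end FreeVariables

/-- Some rule of `σπα` applies to the judgement `Γ ⊢ M`. -/
def Reducible (Γ : List ℕ) (M : Tm) : Prop := ∃ p, StepJ false (Γ, M) p

/-- `IsShift s Δ a` says that `s` is a left-nested composition of projections discarding the
context `a, Δ`, so that `π_a` is its last factor. -/
inductive IsShift : Subst → List ℕ → ℕ → Prop
  | pi (a : ℕ) : IsShift (.pi a) [] a
  | comp {s : Subst} {Δ : List ℕ} {b : ℕ} (a : ℕ) :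
      IsShift s Δ b → IsShift (.comp s (.pi a)) (Δ ++ [b]) a

section Reducibility

variable {Γ Δ Θ : List ℕ} {M N : Tm} {s : Subst} {u : NSub} {a : ℕ}

theorem StepTm.reducible (h : StepTm false M N) : Reducible Γ M := ⟨_, .step h⟩

theorem reducible_of_mem_FVJ {i : ℕ} (h : a ∈ FVJ (Δ ++ [a]) M i) : Reducible (Δ ++ a :: Γ) M := by
  obtain ⟨b, hb⟩ := exists_forall_notMem_FV (lamCtx (Δ ++ [a]) M)
  exact ⟨_, .alpha2 ⟨i, h⟩ hb⟩

theorem Reducible.of_FV_subset (hFV : ∀ i, FV M i ⊆ FV N i)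
    (hstep : ∀ M', StepTm false M M' → Reducible Γ N) : Reducible Γ M → Reducible Γ N := by
  rintro ⟨_, h⟩
  cases h with
  | step h => exact hstep _ h
  | alpha2 h _ =>
    obtain ⟨i, hi⟩ := h
    exact reducible_of_mem_FVJ (FVJ_mono _ hFV i hi)

theorem Reducible.appL : Reducible Γ M → Reducible Γ (.app M N) :=
  .of_FV_subset (fun i => by simpa only [FV] using Finset.subset_union_left)
    fun _ h => h.appL.reducible

theorem Reducible.appR : Reducible Γ N → Reducible Γ (.app M N) :=
  .of_FV_subset (fun i => by simpa only [FV] using Finset.subset_union_right)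
    fun _ h => h.appR.reducible

theorem Reducible.lam : Reducible (a :: Γ) M → Reducible Γ (.lam a M) := by
  rintro ⟨p, h⟩
  generalize hΓ : a :: Γ = Γ' at h
  cases h with
  | step h => exact h.lamCong.reducible
  | @alpha2 _ Δ _ _ _ h _ =>
    cases Δ with
    | nil =>
      obtain ⟨rfl, rfl⟩ := List.cons.inj hΓ
      obtain ⟨b, hb⟩ := exists_forall_notMem_FV (.lam a M)
      exact (StepTm.alpha1 h hb).reducible
    | cons d Δ =>
      obtain ⟨rfl, rfl⟩ := List.cons.inj hΓ
      exact reducible_of_mem_FVJ h.choose_spec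

theorem IsShift.context_eq (h : IsShift s Δ a) (hs : TrSub Γ s Θ u) : Γ = Δ ++ a :: Θ := by
  induction h generalizing Θ u with
  | pi => cases hs; rfl
  | comp _ _ ih =>
    cases hs with
    | comp hs hπ =>
      cases hπ
      rw [ih hs, List.append_assoc, List.singleton_append]

theorem IsShift.Osub_apply (h : IsShift s Δ a) (A : ℕ → Finset ℕ) (n : ℕ) :
    Osub s A (n + Δ.length + 1) = A n := by
  induction h generalizing A n with
  | pi => simp only [Osub, Opi, List.length_nil, add_zero]
  | comp _ _ ih =>
    simpa only [Osub, Opi, List.length_append, List.length_singleton, ← add_assoc,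
      add_right_comm n 1] using ih (Opi A) (n + 1)

theorem step_or_isShift : ∀ {s : Subst} {Γ Δ : List ℕ} {u : NSub}, TrSub Γ s Δ u →
    (∃ s', StepSub false s s') ∨ s = .id ∨ (∃ q N a, s = .cons q N a) ∨ ∃ Θ a, IsShift s Θ a
  | .id, _, _, _, _ => .inr (.inl rfl)
  | .pi a, _, _, _, _ => .inr (.inr (.inr ⟨_, _, .pi a⟩))
  | .cons _ _ _, _, _, _, _ => .inr (.inr (.inl ⟨_, _, _, rfl⟩))
  | .comp _ .id, _, _, _, _ => .inl ⟨_, .idR⟩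
  | .comp _ (.comp _ _), _, _, _, _ => .inl ⟨_, .ass⟩
  | .comp _ (.cons _ _ _), _, _, _, _ => .inl ⟨_, .map⟩
  | .comp s (.pi a), _, _, _, .comp hs (.pi _ _) => by
    rcases step_or_isShift hs with ⟨s', h⟩ | rfl | ⟨q, N, c, rfl⟩ | ⟨Θ, c, h⟩
    · exact .inl ⟨_, .compL h⟩
    · exact .inl ⟨_, .idShift⟩
    · cases hs
      exact .inl ⟨_, .consShift⟩
    · exact .inr (.inr (.inr ⟨_, _, .comp a h⟩))

theorem IsShift.reducible_clos_var (h : IsShift s Δ a) (hs : TrSub Γ s Θ u) (b : ℕ) :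
    Reducible Γ (.clos s (.var b)) := by
  by_cases hab : a = b
  · subst hab
    obtain rfl := h.context_eq hs
    refine reducible_of_mem_FVJ (i := 0) (FV_add_length_subset_FVJ _ _ _ ?_)
    rw [FV, List.length_append, List.length_singleton, ← add_assoc, h.Osub_apply]
    simp only [FV, if_true, Finset.mem_singleton]
  · cases h with
    | pi => exact (StepTm.pi1 hab).reducible
    | comp => exact (StepTm.pi2 hab).reducible

theorem reducible_clos_var (hs : TrSub Γ s Δ u) (b : ℕ) : Reducible Γ (.clos s (.var b)) := by
  rcases step_or_isShift hs with ⟨s', h⟩ | rfl | ⟨q, N, a, rfl⟩ | ⟨Θ, a, h⟩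
  · exact (StepTm.closL h).reducible
  · exact StepTm.idVar.reducible
  · obtain rfl | hab := eq_or_ne a b
    · exact StepTm.consVar.reducible
    · exact (StepTm.new hab).reducible
  · exact h.reducible_clos_var hs b

theorem reducible_clos (hs : TrSub Γ s Δ u) : ∀ M : Tm, Reducible Γ (.clos s M)
  | .var b => reducible_clos_var hs b
  | .app _ _ => StepTm.app.reducible
  | .lam _ _ => StepTm.abs.reducible
  | .clos _ _ => StepTm.clos.reducible

theorem TrTm.isNf : ∀ {M : Tm} {Γ : List ℕ} {U : NTm}, TrTm Γ M U → ¬ Reducible Γ M → U.IsNf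
  | .var _, _, _, h, _ => by
    obtain ⟨n, rfl⟩ := h.exists_eq_dbr
    exact .dbr n
  | .app _ _, _, _, .app hM hN, hnf => .app (hM.isNf (hnf ·.appL)) (hN.isNf (hnf ·.appR))
  | .lam _ _, _, _, .lam hM, hnf => .lam (hM.isNf (hnf ·.lam))
  | .clos _ M, _, _, .clos hs _, hnf => absurd (reducible_clos hs M) hnf

end Reducibility

/-- a σπα-normal form of a judgement translates to a σ-normal form,
reachable by σ-reduction from the translation of the original judgement. -/
theorem spa_nf_corresponds {Γ Θ : List ℕ} {M L : Tm} {U V : NTm}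
    (hred : Relation.ReflTransGen (StepJ false) (Γ, M) (Θ, L))
    (hnf : ∀ p : List ℕ × Tm, ¬ StepJ false (Θ, L) p)
    (hU : TrTm Γ M U) (hV : TrTm Θ L V) :
    (∀ W : NTm, ¬ NStepTm false V W) ∧ Relation.ReflTransGen (NStepTm false) U V := by
  obtain ⟨V', hV', heval⟩ := exists_trTm_of_reflTransGen_stepJ hred hU
  obtain rfl := hV.unique hV'
  have hVnf : V.IsNf := hV.isNf fun ⟨p, hp⟩ => hnf p hp
  obtain ⟨W, hUW, hWnf⟩ := U.hasNf
  have hWV : W = V :=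
    NTm.eval_injOn_isNf hWnf hVnf ((NTm.eval_eq_of_red hUW).symm.trans heval.symm)
  exact ⟨hVnf.not_nStepTm, hWV ▸ hUW⟩
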